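/- 𝔏(F₂)^w_{O(n)} = CF: a language is context-free if and only if it is recognized by some weakly linear-time bounded F₂-automaton. -/

import Mathlib

/-- A `G`-automaton over input alphabet `α`: a nondeterministic finite automaton
equipped with a register holding an element of the group `G`. -/
structure GAutomaton (α : Type*) (G : Type*) [Group G] where
  /-- the (finite) state set -/
  Q : Type
  finQ : Finite Q
  /-- the initial state -/
  q0 : Q
  /-- the accepting states -/
  acc : Set Q
  /-- the (finite) transition relation; `none` stands for ε -/
  δ : Set (Q × Option α × Q × G)
  finδ : δ.Finite

namespace GAutomaton

variable {α : Type*} {G : Type*} [Group G]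

/-- One computation step between configurations `(state, register, remaining input)`. -/
def Step (M : GAutomaton α G) (c c' : M.Q × G × List α) : Prop :=
  ∃ σ m, (c.1, σ, c'.1, m) ∈ M.δ ∧ c'.2.1 = c.2.1 * m ∧
    match σ with
    | none => c'.2.2 = c.2.2
    | some s => c.2.2 = s :: c'.2.2

/-- `M.StepsIn k c c'` : configuration `c'` is reachable from `c` in exactly `k` steps. -/
def StepsIn (M : GAutomaton α G) : ℕ → (M.Q × G × List α) → (M.Q × G × List α) → Prop
  | 0, c, c' => c = c'
  | n + 1, c, c' => ∃ d, M.Step c d ∧ M.StepsIn n d c'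

/-- `M` accepts the word `w` within `t` computation steps. -/
def AcceptsIn (M : GAutomaton α G) (w : List α) (t : ℕ) : Prop :=
  ∃ k ≤ t, ∃ q ∈ M.acc, M.StepsIn k (M.q0, 1, w) (q, 1, [])

/-- The language recognized by `M`. -/
def lang (M : GAutomaton α G) : Language α := {w | ∃ t, M.AcceptsIn w t}

/-- `M` is real-time if every transition consumes an input symbol. -/
def RealTime (M : GAutomaton α G) : Prop := ∀ tr ∈ M.δ, tr.2.1 ≠ none

end GAutomaton

/-- `L ∈ 𝔏(G)` : the language `L` is recognized by some `G`-automaton. -/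
def GRecognizable (G : Type*) [Group G] {α : Type*} (L : Language α) : Prop :=
  ∃ M : GAutomaton α G, M.lang = L

/-- `L ∈ 𝔏(G)ʷ_{t(n)}` : `L` is recognized by a weakly `t(n)` time-bounded `G`-automaton. -/
def GRecognizableInTime (G : Type*) [Group G] {α : Type*} (L : Language α) (t : ℕ → ℕ) : Prop :=
  ∃ M : GAutomaton α G, M.lang = L ∧ ∀ w ∈ L, M.AcceptsIn w (t w.length)

/-- `L ∈ 𝔏(G)ʷ_{O(n)}` : `L` is recognized by a weakly linear-time bounded `G`-automaton. -/
def GRecognizableLinTime (G : Type*) [Group G] {α : Type*} (L : Language α) : Prop :=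
  ∃ C : ℕ, GRecognizableInTime G L (fun n => C * n + C)

/-!
The Cayley graph of a free group is a tree. The group elements multiplied to the register by an
accepting run form a closed path of bounded jumps in this tree, and two consecutive jumps around the
first point of the path where the distance to the start stops growing can be replaced by a single
jump of the same bounded length. Hence the run is parsed by the rules
`(p, gh, q) → (p, g, r)(r, h, q)` with `g` and `h` of bounded length.

Conversely, a stack is stored as the inverse of a positive word. A pop of a letter that is not on
top leaves a negative letter, which can never be cancelled if every pushed word ends with a marker.
For linear time, the letters of the stack are the factors of the right hand sides of the grammar. A
nonempty word derived from a factor is split into two nonempty words derived from two factors until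
the parts are single letters. Derivations that only erase symbols or rename factors are absorbed
into the side conditions of the rules, so that the number of splittings is less than the length of
the word.
-/

namespace GAutomaton

variable {α G H : Type*} [Group G] [Group H]

theorem step_iff {M : GAutomaton α G} {c c' : M.Q × G × List α} :
    M.Step c c' ↔ ∃ σ m, (c.1, σ, c'.1, m) ∈ M.δ ∧ c'.2.1 = c.2.1 * m ∧
      c.2.2 = σ.toList ++ c'.2.2 := by
  refine exists_congr fun σ => exists_congr fun m => ?_
  cases σ <;> simp [eq_comm]

theorem stepsIn_one_of_mem {M : GAutomaton α G} {p q : M.Q} {σ : Option α} {m x : G} {v : List α}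
    (h : (p, σ, q, m) ∈ M.δ) : M.StepsIn 1 (p, x, σ.toList ++ v) (q, x * m, v) :=
  ⟨_, step_iff.mpr ⟨σ, m, h, rfl, rfl⟩, rfl⟩

theorem StepsIn.trans {M : GAutomaton α G} {j k : ℕ} {c d e : M.Q × G × List α}
    (h : M.StepsIn j c d) (h' : M.StepsIn k d e) : M.StepsIn (j + k) c e := by
  induction j generalizing c with
  | zero => cases h; rwa [Nat.zero_add]
  | succ j ih =>
    obtain ⟨b, hb, hbd⟩ := h
    rw [Nat.add_right_comm]
    exact ⟨b, hb, ih hbd⟩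

/-- The automaton with the register in `H` obtained from `M` by applying `φ` to every register
multiplication; it has the same states as `M`. -/
def map (M : GAutomaton α G) (φ : G →* H) : GAutomaton α H where
  Q := M.Q
  finQ := M.finQ
  q0 := M.q0
  acc := M.acc
  δ := Prod.map id (Prod.map id (Prod.map id φ)) '' M.δ
  finδ := M.finδ.image _

theorem step_map_iff {M : GAutomaton α G} {φ : G →* H} {p q : M.Q} {x : G} {z : H}
    {u v : List α} : (M.map φ).Step (p, φ x, u) (q, z, v) ↔
      ∃ y, φ y = z ∧ M.Step (p, x, u) (q, y, v) := by
  simp only [step_iff]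
  constructor
  · rintro ⟨_, _, ⟨⟨_, σ, _, m⟩, hm, h⟩, rfl, hu⟩
    cases h
    exact ⟨x * m, map_mul φ x m, σ, m, hm, rfl, hu⟩
  · rintro ⟨_, rfl, σ, m, hm, rfl, hu⟩
    exact ⟨σ, φ m, ⟨_, hm, rfl⟩, map_mul φ x m, hu⟩

theorem stepsIn_map_iff {M : GAutomaton α G} {φ : G →* H} {k : ℕ} {p q : M.Q} {x : G} {z : H}
    {u v : List α} : (M.map φ).StepsIn k (p, φ x, u) (q, z, v) ↔
      ∃ y, φ y = z ∧ M.StepsIn k (p, x, u) (q, y, v) := by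
  induction k generalizing p x u with
  | zero =>
    simp only [StepsIn]
    grind
  | succ k ih =>
    constructor
    · rintro ⟨⟨r, _, t⟩, hstep, hsteps⟩
      obtain ⟨m, rfl, hm⟩ := step_map_iff.mp hstep
      obtain ⟨y, hy, hk⟩ := ih.mp hsteps
      exact ⟨y, hy, _, hm, hk⟩
    · rintro ⟨y, hy, ⟨r, m, t⟩, hm, hk⟩
      exact ⟨(r, φ m, t), step_map_iff.mpr ⟨m, rfl, hm⟩, ih.mpr ⟨y, hy, hk⟩⟩

theorem acceptsIn_map_iff {M : GAutomaton α G} {φ : G →* H} (hφ : Function.Injective φ)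
    {w : List α} {t : ℕ} : (M.map φ).AcceptsIn w t ↔ M.AcceptsIn w t := by
  have hsteps (k : ℕ) (q : M.Q) :
      (M.map φ).StepsIn k (M.q0, 1, w) (q, 1, []) ↔ M.StepsIn k (M.q0, 1, w) (q, 1, []) := by
    rw [← map_one φ, stepsIn_map_iff]
    simp [map_eq_one_iff φ hφ]
  exact exists_congr fun k => and_congr_right fun _ => exists_congr fun q =>
    and_congr_right fun _ => hsteps k q

theorem lang_map {M : GAutomaton α G} {φ : G →* H} (hφ : Function.Injective φ) :
    (M.map φ).lang = M.lang :=
  Set.ext fun _ => exists_congr fun _ => acceptsIn_map_iff hφ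

end GAutomaton

section Embedding

variable {α G H : Type*} [Group G] [Group H] {L : Language α} {φ : G →* H}

theorem GRecognizable.of_injective (hL : GRecognizable G L) (hφ : Function.Injective φ) :
    GRecognizable H L := by
  obtain ⟨M, rfl⟩ := hL
  exact ⟨M.map φ, GAutomaton.lang_map hφ⟩

theorem GRecognizableInTime.of_injective {t : ℕ → ℕ} (hL : GRecognizableInTime G L t)
    (hφ : Function.Injective φ) : GRecognizableInTime H L t := by
  obtain ⟨M, rfl, ht⟩ := hL
  exact ⟨M.map φ, GAutomaton.lang_map hφ,
    fun w hw => (GAutomaton.acceptsIn_map_iff hφ).mpr (ht w hw)⟩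

/-- The action of `ℤ` on the free group with basis `ℤ` by translation of the basis. -/
def freeGroupShift : Multiplicative ℤ →* MulAut (FreeGroup ℤ) where
  toFun n := FreeGroup.freeGroupCongr (Equiv.addRight n.toAdd)
  map_one' := by
    ext x
    simp
  map_mul' m n := by
    ext x
    simp only [MulAut.mul_apply, FreeGroup.freeGroupCongr_apply, FreeGroup.map.comp]
    congr 2
    funext k
    simp [add_left_comm, add_comm]

/- Mapping `a` to the generator `0` and `b` to the translation embeds the conjugates `bⁿab⁻ⁿ` as
the basis of `FreeGroup ℤ` in its semidirect product with `ℤ`. -/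
theorem injective_lift_zpow_conj {β : Type*} {a b : β} (hab : a ≠ b) :
    Function.Injective (FreeGroup.lift fun n : ℤ =>
      FreeGroup.of b ^ n * FreeGroup.of a * (FreeGroup.of b ^ n)⁻¹) := by
  classical
  let χ : FreeGroup β →* FreeGroup ℤ ⋊[freeGroupShift] Multiplicative ℤ :=
    FreeGroup.lift (Function.update (fun _ => SemidirectProduct.inl (FreeGroup.of 0)) b
      (SemidirectProduct.inr (Multiplicative.ofAdd 1)))
  have hχ : χ.comp (FreeGroup.lift fun n : ℤ =>
      FreeGroup.of b ^ n * FreeGroup.of a * (FreeGroup.of b ^ n)⁻¹) = SemidirectProduct.inl := by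
    ext1 n
    have hconj := SemidirectProduct.inl_aut (φ := freeGroupShift) (Multiplicative.ofAdd n)
      (FreeGroup.of 0)
    have hpow : Multiplicative.ofAdd (1 : ℤ) ^ n = Multiplicative.ofAdd n := by
      rw [← ofAdd_zsmul, smul_eq_mul, mul_one]
    simp only [MonoidHom.comp_apply, χ, FreeGroup.lift_apply_of, map_mul, map_zpow, map_inv,
      Function.update_self, Function.update_of_ne hab]
    rw [← map_zpow, hpow, ← map_inv, ← hconj]
    simp [freeGroupShift]
  exact .of_comp (f := χ) (by rw [← MonoidHom.coe_comp, hχ]; exact SemidirectProduct.inl_injective)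

theorem exists_injective_freeGroup_of_countable (ι β : Type*) [Countable ι] [Nontrivial β] :
    ∃ φ : FreeGroup ι →* FreeGroup β, Function.Injective φ := by
  obtain ⟨f, hf⟩ := exists_injective_nat ι
  have hfℤ : Function.Injective fun i => (f i : ℤ) := Nat.cast_injective.comp hf
  obtain ⟨a, b, hab⟩ := exists_pair_ne β
  exact ⟨(FreeGroup.lift _).comp (FreeGroup.map _),
    (injective_lift_zpow_conj hab).comp (FreeGroup.map_injective hfℤ)⟩

end Embedding

section TreeMetric

open FreeGroup

variable {β : Type*}

theorem isReduced_invRev_append {a b : β × Bool} {x y : List (β × Bool)}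
    (hx : IsReduced (a :: x)) (hy : IsReduced (b :: y)) (hab : a ≠ b) :
    IsReduced (invRev (a :: x) ++ b :: y) := by
  classical
  have hinv : IsReduced (invRev (a :: x)) := by
    rw [isReduced_iff_reduce_eq, reduce_invRev, hx.reduce_eq]
  refine List.IsChain.append hinv hy ?_
  obtain ⟨a, s⟩ := a
  obtain ⟨b, t⟩ := b
  cases s <;> cases t <;> simp_all [invRev]

variable [DecidableEq β]

/-- The length of the longest common prefix of two lists. For reduced words in a free group this is
the Gromov product, based at `1`, of the vertices of the Cayley tree that they represent. -/
def commonPrefixLength : List β → List β → ℕ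
  | a :: l, b :: m => if a = b then commonPrefixLength l m + 1 else 0
  | _, _ => 0

theorem min_commonPrefixLength_le (x y z : List β) :
    min (commonPrefixLength x y) (commonPrefixLength y z) ≤ commonPrefixLength x z := by
  induction x generalizing y z with
  | nil => cases y <;> simp [commonPrefixLength]
  | cons a x ih =>
    rcases y with _ | ⟨b, y⟩
    · simp [commonPrefixLength]
    rcases z with _ | ⟨c, z⟩
    · simp [commonPrefixLength]
    have := ih y z
    simp only [commonPrefixLength]
    grind

theorem norm_mk_of_isReduced {x : List (β × Bool)} (hx : IsReduced x) :
    (mk x).norm = x.length := by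
  rw [FreeGroup.norm, toWord_mk, hx.reduce_eq]

theorem norm_inv_mk_mul_mk {x y : List (β × Bool)} (hx : IsReduced x) (hy : IsReduced y) :
    ((mk x)⁻¹ * mk y).norm + 2 * commonPrefixLength x y = x.length + y.length := by
  induction x generalizing y with
  | nil =>
    rw [← one_eq_mk, inv_one, one_mul, norm_mk_of_isReduced hy]
    simp [commonPrefixLength]
  | cons a x ih =>
    rcases y with _ | ⟨b, y⟩
    · rw [← one_eq_mk, mul_one, norm_inv_eq, norm_mk_of_isReduced hx]
      simp [commonPrefixLength]
    rcases eq_or_ne a b with rfl | hab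
    · have hcancel : (mk (a :: x))⁻¹ * mk (a :: y) = (mk x)⁻¹ * mk y := by
        rw [← List.singleton_append (l := x), ← List.singleton_append (l := y), ← mul_mk, ← mul_mk]
        group
      simp only [hcancel, commonPrefixLength, if_true, List.length_cons]
      have := ih hx.tail hy.tail
      simp only [List.tail_cons] at this
      omega
    · rw [inv_mk, mul_mk, norm_mk_of_isReduced (isReduced_invRev_append hx hy hab)]
      simp [commonPrefixLength, hab]

/- This is Gromov's four-point condition with `δ = 0` for the points `1`, `x`, `y`, `z`. -/
theorem norm_add_norm_inv_mul_le_max (x y z : FreeGroup β) :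
    y.norm + (x⁻¹ * z).norm ≤ max (x.norm + (y⁻¹ * z).norm) (z.norm + (x⁻¹ * y).norm) := by
  have gromov (u v : FreeGroup β) :
      (u⁻¹ * v).norm + 2 * commonPrefixLength u.toWord v.toWord = u.norm + v.norm := by
    simpa only [mk_toWord, FreeGroup.norm] using
      norm_inv_mk_mul_mk (isReduced_toWord (x := u)) (isReduced_toWord (x := v))
  have := min_commonPrefixLength_le x.toWord y.toWord z.toWord
  have := gromov x y
  have := gromov y z
  have := gromov x z
  omega

theorem norm_mul_le_of_norm_le_norm_mul {D : ℕ} {x g h : FreeGroup β} (hg : g.norm ≤ D)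
    (hh : h.norm ≤ D) (hxg : x.norm ≤ (x * g).norm) (hxgh : (x * g * h).norm ≤ (x * g).norm) :
    (g * h).norm ≤ D := by
  have := norm_add_norm_inv_mul_le_max x (x * g) (x * g * h)
  rw [inv_mul_cancel_left, inv_mul_cancel_left, mul_assoc x, inv_mul_cancel_left,
    ← mul_assoc x] at this
  omega

/- The two factors are the steps into and out of the first peak of the path of partial products. -/
theorem exists_norm_mul_le_of_norm_mul_prod_le {D : ℕ} (x g : FreeGroup β)
    {l : List (FreeGroup β)} (hl : ∀ h ∈ g :: l, h.norm ≤ D) (hne : l ≠ [])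
    (hxg : x.norm ≤ (x * g).norm) (hprod : (x * (g :: l).prod).norm ≤ x.norm) :
    ∃ l₁ h h' l₂, g :: l = l₁ ++ h :: h' :: l₂ ∧ (h * h').norm ≤ D := by
  induction l generalizing x g with
  | nil => exact absurd rfl hne
  | cons h l ih =>
    simp only [List.forall_mem_cons] at hl
    obtain ⟨hg, hh, hl⟩ := hl
    rcases le_or_gt (x * g * h).norm (x * g).norm with hpeak | hup
    · exact ⟨[], g, h, l, rfl, norm_mul_le_of_norm_le_norm_mul hg hh hxg hpeak⟩
    have hprod' : (x * g * (h :: l).prod).norm ≤ x.norm := by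
      rwa [List.prod_cons, ← mul_assoc] at hprod
    have hne' : l ≠ [] := by
      rintro rfl
      rw [List.prod_singleton] at hprod'
      omega
    obtain ⟨l₁, k, k', l₂, hsplit, hk⟩ := ih (x * g) h (List.forall_mem_cons.mpr ⟨hh, hl⟩) hne'
      hup.le (hprod'.trans hxg)
    exact ⟨g :: l₁, k, k', l₂, by rw [hsplit, List.cons_append], hk⟩

/-- A set is triangulating if every trivial product of at least two of its elements has two
consecutive factors whose product lies in the set. Closed polygons with sides in the set can then
be cut into triangles with sides in the set, as in the theorem of Muller and Schupp. -/
def IsTriangulating {G : Type*} [Monoid G] (B : Set G) : Prop :=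
  ∀ l : List G, (∀ g ∈ l, g ∈ B) → l.prod = 1 → 2 ≤ l.length →
    ∃ l₁ g h l₂, l = l₁ ++ g :: h :: l₂ ∧ g * h ∈ B

theorem isTriangulating_setOf_norm_le (D : ℕ) :
    IsTriangulating {g : FreeGroup β | g.norm ≤ D} := by
  intro l hl hprod hlen
  obtain ⟨g, l, rfl⟩ := List.exists_cons_of_length_pos (by omega : 0 < l.length)
  refine exists_norm_mul_le_of_norm_mul_prod_le 1 g hl ?_ (by simp) (by simp [hprod])
  rintro rfl
  simp at hlen

theorem finite_setOf_norm_le [Finite β] (D : ℕ) : {g : FreeGroup β | g.norm ≤ D}.Finite :=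
  (List.finite_length_le (β × Bool) D).preimage toWord_injective.injOn

end TreeMetric

section GrammarSemantics

variable {α N : Type*}

/-- The language denoted by a symbol under the interpretation `I` of the nonterminals. -/
def symbolLanguage (I : N → Language α) : Symbol α N → Language α
  | .terminal a => {[a]}
  | .nonterminal A => I A

variable {g : ContextFreeGrammar α} {I : g.NT → Language α}

theorem prod_symbolLanguage_le_of_derives
    (hI : ∀ r ∈ g.rules, (r.output.map (symbolLanguage I)).prod ≤ I r.input)
    {s t : List (Symbol α g.NT)} (h : g.Derives s t) :
    (t.map (symbolLanguage I)).prod ≤ (s.map (symbolLanguage I)).prod := by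
  induction h with
  | refl => rfl
  | tail _ hp ih =>
    refine le_trans ?_ ih
    obtain ⟨r, hr, hrw⟩ := hp
    obtain ⟨p, q, rfl, rfl⟩ := hrw.exists_parts
    have hle : (r.output.map (symbolLanguage I)).prod ≤ symbolLanguage I (.nonterminal r.input) :=
      hI r hr
    simp only [List.map_append, List.prod_append, List.map_singleton, List.prod_singleton]
    gcongr

theorem mem_prod_symbolLanguage_of_derives
    (hI : ∀ r ∈ g.rules, (r.output.map (symbolLanguage I)).prod ≤ I r.input)
    {s : List (Symbol α g.NT)} {w : List α} (h : g.Derives s (w.map .terminal)) :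
    w ∈ (s.map (symbolLanguage I)).prod := by
  refine prod_symbolLanguage_le_of_derives hI h ?_
  clear h
  induction w with
  | nil => exact Language.nil_mem_one
  | cons a w ih => exact ⟨[a], rfl, w, ih, rfl⟩

theorem derives_output {r : ContextFreeRule α g.NT} (hr : r ∈ g.rules) :
    g.Derives [.nonterminal r.input] r.output :=
  .single ⟨r, hr, .input_output⟩

theorem derives_append {s s' t t' : List (Symbol α g.NT)} (hs : g.Derives s s')
    (ht : g.Derives t t') : g.Derives (s ++ t) (s' ++ t') :=
  (hs.append_right t).trans (ht.append_left s')

end GrammarSemantics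

section TripleConstruction

namespace GAutomaton

variable {α : Type*} {G : Type} [Group G] (M : GAutomaton α G)

/-- The nonterminals of the triple construction: `some (p, g, q)` generates words that can be read
from state `p` to state `q` while the register gets multiplied by `g`, and `none` is initial. -/
abbrev TripleNonterminal : Type := Option (M.Q × G × M.Q)

/-- The rules of the triple construction, which composes only triples with group elements in `B`. -/
def tripleRules (B : Set G) : Set (ContextFreeRule α M.TripleNonterminal) :=
  (fun f => ⟨none, [.nonterminal (some (M.q0, 1, f))]⟩) '' M.acc ∪
  Set.range (fun p => ⟨some (p, 1, p), []⟩) ∪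
  (fun (p, σ, q, m) => ⟨some (p, m, q), σ.toList.map .terminal⟩) '' M.δ ∪
  (fun ((p, r, q), g, h) =>
    ⟨some (p, g * h, q), [.nonterminal (some (p, g, r)), .nonterminal (some (r, h, q))]⟩) ''
      Set.univ ×ˢ B ×ˢ B

variable {M} {B : Set G}

theorem finite_tripleRules (hB : B.Finite) : (M.tripleRules B).Finite := by
  have := M.finQ
  exact (((M.acc.toFinite.image _).union (Set.finite_range _)).union (M.finδ.image _)).union
    ((Set.finite_univ.prod (hB.prod hB)).image _)

variable (hB : B.Finite)

variable (M) in
/-- The grammar of the triple construction. -/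
noncomputable def tripleGrammar : ContextFreeGrammar α where
  NT := M.TripleNonterminal
  initial := none
  rules := (finite_tripleRules hB).toFinset

theorem tripleGrammar_derives_of_mem {r : ContextFreeRule α M.TripleNonterminal}
    (hr : r ∈ M.tripleRules B) : (M.tripleGrammar hB).Derives [.nonterminal r.input] r.output :=
  derives_output (g := M.tripleGrammar hB) ((finite_tripleRules hB).mem_toFinset.mpr hr)

theorem tripleGrammar_derives_start {f : M.Q} (hf : f ∈ M.acc) :
    (M.tripleGrammar hB).Derives [.nonterminal none] [.nonterminal (some (M.q0, 1, f))] :=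
  tripleGrammar_derives_of_mem hB (.inl (.inl (.inl ⟨f, hf, rfl⟩)))

theorem tripleGrammar_derives_refl (p : M.Q) :
    (M.tripleGrammar hB).Derives [.nonterminal (some (p, 1, p))] [] :=
  tripleGrammar_derives_of_mem hB (.inl (.inl (.inr ⟨p, rfl⟩)))

theorem tripleGrammar_derives_transition {p q : M.Q} {σ : Option α} {m : G}
    (h : (p, σ, q, m) ∈ M.δ) :
    (M.tripleGrammar hB).Derives [.nonterminal (some (p, m, q))] (σ.toList.map .terminal) :=
  tripleGrammar_derives_of_mem hB (.inl (.inr ⟨_, h, rfl⟩))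

theorem tripleGrammar_derives_comp (p r q : M.Q) {g h : G} (hg : g ∈ B) (hh : h ∈ B) :
    (M.tripleGrammar hB).Derives [.nonterminal (some (p, g * h, q))]
      [.nonterminal (some (p, g, r)), .nonterminal (some (r, h, q))] :=
  tripleGrammar_derives_of_mem hB (.inr ⟨((p, r, q), g, h), ⟨trivial, hg, hh⟩, rfl⟩)

variable (M) in
/-- The intended meaning of the nonterminals of the triple construction. -/
def tripleLanguage : M.TripleNonterminal → Language α
  | none => M.lang
  | some (p, g, q) => {w | ∃ k, ∀ x v, M.StepsIn k (p, x, w ++ v) (q, x * g, v)}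

theorem prod_symbolLanguage_tripleLanguage_le {r : ContextFreeRule α M.TripleNonterminal}
    (hr : r ∈ M.tripleRules B) :
    (r.output.map (symbolLanguage M.tripleLanguage)).prod ≤ M.tripleLanguage r.input := by
  intro w hw
  rcases hr with ((⟨f, hf, rfl⟩ | ⟨p, rfl⟩) | ⟨⟨p, σ, q, m⟩, hδ, rfl⟩) |
    ⟨⟨⟨p, r, q⟩, g, h⟩, -, rfl⟩
  · rw [List.map_singleton, List.prod_singleton] at hw
    obtain ⟨k, hk⟩ := hw
    refine ⟨k, k, le_rfl, f, hf, ?_⟩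
    simpa only [List.append_nil, mul_one] using hk 1 []
  · obtain rfl : w = [] := hw
    exact ⟨0, fun x v => by simp [StepsIn]⟩
  · obtain rfl : w = σ.toList := by
      cases σ
      · exact hw
      · simp only [Option.toList_some, List.map_cons, List.map_nil, List.prod_singleton] at hw
        exact hw
    exact ⟨1, fun x v => stepsIn_one_of_mem hδ⟩
  · rw [List.map_cons, List.map_singleton, List.prod_cons, List.prod_singleton] at hw
    obtain ⟨u, ⟨j, hj⟩, v, ⟨k, hk⟩, rfl⟩ := hw
    refine ⟨j + k, fun x t => ?_⟩
    rw [List.append_assoc, ← mul_assoc]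
    exact (hj x (v ++ t)).trans (hk (x * g) t)

theorem language_tripleGrammar_le : (M.tripleGrammar hB).language ≤ M.lang := by
  intro w hw
  have := mem_prod_symbolLanguage_of_derives (g := M.tripleGrammar hB) (I := M.tripleLanguage)
    (fun r hr => prod_symbolLanguage_tripleLanguage_le
      ((finite_tripleRules hB).mem_toFinset.mp hr)) hw
  rwa [List.map_singleton, List.prod_singleton] at this

variable (M) in
/-- Runs of the automaton in which every segment is generated by the triple construction. The list
records the elements of `B` multiplied to the register by the segments. -/
inductive TripleRun : M.Q → List G → M.Q → List α → Prop
  | nil (p : M.Q) : TripleRun p [] p []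
  | cons {p r q : M.Q} {g : G} {l : List G} {u v : List α}
      (hu : (M.tripleGrammar hB).Derives [.nonterminal (some (p, g, r))] (u.map .terminal))
      (hg : g ∈ B) (hv : TripleRun r l q v) : TripleRun p (g :: l) q (u ++ v)

variable {hB} {p q : M.Q} {l : List G} {w : List α}

theorem TripleRun.mem (h : M.TripleRun hB p l q w) : ∀ g ∈ l, g ∈ B := by
  induction h with
  | nil => simp
  | cons _ hg _ ih => exact List.forall_mem_cons.mpr ⟨hg, ih⟩

theorem TripleRun.merge {l₁ l₂ : List G} {g h : G}
    (hw : M.TripleRun hB p (l₁ ++ g :: h :: l₂) q w) (hgh : g * h ∈ B) :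
    M.TripleRun hB p (l₁ ++ (g * h) :: l₂) q w := by
  induction l₁ generalizing p w with
  | nil =>
    obtain _ | ⟨hu, hg, _ | ⟨hv, hh, hw⟩⟩ := hw
    rw [← List.append_assoc]
    refine .cons ?_ hgh hw
    rw [List.map_append]
    exact (tripleGrammar_derives_comp hB _ _ _ hg hh).trans (derives_append hu hv)
  | cons _ _ ih =>
    obtain _ | ⟨hu, ha, hw⟩ := hw
    exact .cons hu ha (ih hw)

theorem TripleRun.derives (hT : IsTriangulating B) (h : M.TripleRun hB p l q w)
    (hl : l.prod = 1) :
    (M.tripleGrammar hB).Derives [.nonterminal (some (p, 1, q))] (w.map .terminal) := by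
  induction hn : l.length using Nat.strong_induction_on generalizing l with
  | h n ih =>
    match l, h with
    | [], .nil _ => exact tripleGrammar_derives_refl hB p
    | [g], .cons (u := u) hu _ (.nil _) =>
      rw [List.prod_singleton] at hl
      rwa [hl, ← List.append_nil u] at hu
    | g :: g' :: l, h =>
      obtain ⟨l₁, a, b, l₂, hsplit, hab⟩ := hT _ h.mem hl (by simp)
      rw [hsplit] at h hl hn
      refine ih _ ?_ (h.merge hab) (by simpa [mul_assoc] using hl) rfl
      simp [← hn]

theorem exists_tripleRun_of_stepsIn (hδ : ∀ t ∈ M.δ, t.2.2.2 ∈ B) {k : ℕ} {x y : G}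
    (h : M.StepsIn k (p, x, w) (q, y, [])) : ∃ l, M.TripleRun hB p l q w ∧ y = x * l.prod := by
  induction k generalizing p x w with
  | zero =>
    cases h
    exact ⟨[], .nil _, by simp⟩
  | succ k ih =>
    obtain ⟨⟨r, z, v⟩, hs, hk⟩ := h
    obtain ⟨σ, m, hm, hz, hw⟩ := step_iff.mp hs
    dsimp only at hm hz hw
    subst hz hw
    obtain ⟨l, hl, rfl⟩ := ih hk
    exact ⟨m :: l, .cons (tripleGrammar_derives_transition hB hm) (hδ _ hm) hl,
      by simp [mul_assoc]⟩

theorem isContextFree_lang_of_isTriangulating (hB : B.Finite) (hT : IsTriangulating B)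
    (hδ : ∀ t ∈ M.δ, t.2.2.2 ∈ B) : M.lang.IsContextFree := by
  refine ⟨M.tripleGrammar hB, (language_tripleGrammar_le hB).antisymm ?_⟩
  rintro w ⟨t, k, -, q, hq, hk⟩
  obtain ⟨l, hl, hprod⟩ := exists_tripleRun_of_stepsIn (hB := hB) hδ hk
  rw [one_mul] at hprod
  exact (tripleGrammar_derives_start hB hq).trans (hl.derives hT hprod.symm)

theorem isContextFree_lang {β : Type} [Finite β] (M : GAutomaton α (FreeGroup β)) :
    M.lang.IsContextFree := by
  classical
  obtain ⟨D, hD⟩ := (M.finδ.image fun t => t.2.2.2.norm).bddAbove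
  exact isContextFree_lang_of_isTriangulating (finite_setOf_norm_le D)
    (isTriangulating_setOf_norm_le D) fun t ht => hD ⟨t, ht, rfl⟩

end GAutomaton

end TripleConstruction

theorem isContextFree_of_gRecognizable {α β : Type*} [Countable β] {L : Language α}
    (hL : GRecognizable (FreeGroup β) L) : L.IsContextFree := by
  obtain ⟨φ, hφ⟩ := exists_injective_freeGroup_of_countable β (Fin 2)
  obtain ⟨M, rfl⟩ := hL.of_injective hφ
  exact M.isContextFree_lang

section StackAutomaton

open FreeGroup

variable {α Γ : Type*}

/-- Accepting runs of the stateless pushdown automaton with the rules `P`, where `(A, o, l)` pops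
`A`, reads `o` and pushes `l`. In `StackRun P s w k`, the stack `s` (top first) is emptied while
reading `w` in `k` steps. -/
inductive StackRun (P : Set (Γ × Option α × List Γ)) : List Γ → List α → ℕ → Prop
  | nil : StackRun P [] [] 0
  | pop {A : Γ} {o : Option α} {l s : List Γ} {w : List α} {k : ℕ} (hP : (A, o, l) ∈ P)
      (h : StackRun P (l ++ s) w k) : StackRun P (A :: s) (o.toList ++ w) (k + 1)

variable {P : Set (Γ × Option α × List Γ)} {s t : List Γ} {u v w : List α} {k : ℕ}

theorem StackRun.append {j : ℕ} (hs : StackRun P s u j) (ht : StackRun P t v k) :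
    StackRun P (s ++ t) (u ++ v) (j + k) := by
  induction hs with
  | nil => rwa [Nat.zero_add]
  | pop hP _ ih =>
    rw [List.append_assoc] at ih ⊢
    rw [Nat.add_right_comm]
    exact .pop hP ih

/-- The positive word of the free group that represents a stack. -/
def stackWord (s : List Γ) : FreeGroup Γ := mk (s.map (·, true))

theorem stackWord_append (s t : List Γ) : stackWord (s ++ t) = stackWord s * stackWord t := by
  rw [stackWord, List.map_append, ← mul_mk, stackWord, stackWord]

theorem stackWord_cons_mul_inv_mul (A : Γ) (s l : List Γ) :
    (stackWord (A :: s))⁻¹ * (stackWord [A] * (stackWord l)⁻¹) = (stackWord (l ++ s))⁻¹ := by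
  rw [← List.singleton_append, stackWord_append, stackWord_append]
  group

/-- The automaton that simulates a stateless pushdown automaton with the initial stack `[S]`. Its
register holds the inverse of the word representing the stack, as multiplication acts on the right;
state `true` means that the initial stack has been set up. -/
def stackAutomaton (hP : P.Finite) (S : Γ) : GAutomaton α (FreeGroup Γ) where
  Q := Bool
  finQ := inferInstance
  q0 := false
  acc := {true}
  δ := insert (false, none, true, (stackWord [S])⁻¹)
    ((fun (A, o, l) => (true, o, true, stackWord [A] * (stackWord l)⁻¹)) '' P)
  finδ := (hP.image _).insert _

variable {hP : P.Finite} {S : Γ}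

theorem stackAutomaton_step_false_iff {x y : FreeGroup Γ} {q : Bool} :
    (stackAutomaton hP S).Step (false, x, u) (q, y, v) ↔
      q = true ∧ y = x * (stackWord [S])⁻¹ ∧ u = v := by
  simp [GAutomaton.step_iff, stackAutomaton]

theorem stackAutomaton_step_true_iff {x y : FreeGroup Γ} {q : Bool} :
    (stackAutomaton hP S).Step (true, x, u) (q, y, v) ↔ q = true ∧
      ∃ A o l, (A, o, l) ∈ P ∧ y = x * (stackWord [A] * (stackWord l)⁻¹) ∧ u = o.toList ++ v := by
  simp only [GAutomaton.step_iff, stackAutomaton]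
  constructor
  · rintro ⟨o, m, h | ⟨⟨A, o, l⟩, hA, h⟩, hy, hu⟩
    · cases h
    · cases h
      exact ⟨rfl, A, o, l, hA, hy, hu⟩
  · rintro ⟨rfl, A, o, l, hA, hy, hu⟩
    exact ⟨o, _, .inr ⟨(A, o, l), hA, rfl⟩, hy, hu⟩

theorem StackRun.stepsIn (h : StackRun P s w k) :
    (stackAutomaton hP S).StepsIn k (true, (stackWord s)⁻¹, w) (true, 1, []) := by
  induction h with
  | nil => simp [stackWord, GAutomaton.StepsIn, ← one_eq_mk]
  | @pop A o l s _ _ hA _ ih =>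
    have hword := (stackWord_cons_mul_inv_mul A s l).symm
    exact ⟨_, stackAutomaton_step_true_iff.mpr ⟨rfl, A, o, l, hA, hword, rfl⟩, ih⟩

/-- A set of rules is end-marked by `c` if `c` is pushed at the bottom by every rule that pops
another letter, and nothing is pushed by the rules that pop `c`. -/
def IsEndMarked (P : Set (Γ × Option α × List Γ)) (c : Γ) : Prop :=
  ∀ A o l, (A, o, l) ∈ P → A = c ∧ l = [] ∨ A ≠ c ∧ ∃ l', l = l' ++ [c]

/-- The relation between consecutive letters in the words that represent the register of a
simulation: they do not cancel, and only `c` occurs positively above a negative letter. -/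
def StackRel (c : Γ) (x y : Γ × Bool) : Prop :=
  (x.1 = y.1 → x.2 = y.2) ∧ (x.2 = true → y.2 = false → x.1 = c)

section StackRel

variable {c A : Γ} {o : Option α} {l : List Γ} {t : List (Γ × Bool)}

theorem isReduced_of_isChain_stackRel (ht : t.IsChain (StackRel c)) : IsReduced t :=
  ht.imp fun _ _ h => h.1

theorem isChain_stackRel_map (c : Γ) (l : List Γ) :
    (l.map (·, true)).IsChain (StackRel c) :=
  (List.isChain_map _).mpr (List.pairwise_of_forall fun _ _ => ⟨fun _ => rfl, by simp⟩).isChain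

theorem isChain_stackRel_push_append (hc : IsEndMarked P c) (hP : (A, o, l) ∈ P)
    (ht : t.IsChain (StackRel c))
    (hA : A ≠ c → ∀ y ∈ t.head?, StackRel c (c, true) y) :
    (l.map (·, true) ++ t).IsChain (StackRel c) := by
  obtain ⟨rfl, rfl⟩ | ⟨hAc, l', rfl⟩ := hc A o l hP
  · exact ht
  · refine (isChain_stackRel_map c _).append ht fun x hx y hy => ?_
    obtain rfl : (c, true) = x := by simpa using hx
    exact hA hAc y hy

theorem isChain_stackRel_pop (hc : IsEndMarked P c) (hP : (A, o, l) ∈ P)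
    (ht : ((A, true) :: t).IsChain (StackRel c)) : (l.map (·, true) ++ t).IsChain (StackRel c) := by
  rw [List.isChain_cons] at ht
  refine isChain_stackRel_push_append hc hP ht.2 fun hA y hy => ?_
  have hpos : y.2 = true := by simpa using mt ((ht.1 y hy).2 rfl) hA
  exact ⟨fun _ => hpos.symm, by simp [hpos]⟩

theorem isChain_stackRel_pop_of_head?_ne (hc : IsEndMarked P c) (hP : (A, o, l) ∈ P)
    (ht : t.IsChain (StackRel c)) (hA : t.head? ≠ some (A, true)) :
    (l.map (·, true) ++ (A, false) :: t).IsChain (StackRel c) := by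
  refine isChain_stackRel_push_append hc hP (List.isChain_cons.mpr ⟨fun y hy => ⟨?_, by simp⟩, ht⟩)
    fun hAc y hy => ?_
  · rintro rfl
    obtain ⟨A, _ | _⟩ := y
    · rfl
    · exact absurd hy hA
  · obtain rfl : (A, false) = y := by simpa using hy
    exact ⟨fun h => absurd h.symm hAc, fun _ _ => rfl⟩

end StackRel

/- A negative letter of the register can never be cancelled, as only positive letters are pushed and
the end markers keep these from cancelling against it. -/
theorem exists_stackRun_of_stepsIn {c : Γ} (hc : IsEndMarked P c) {t : List (Γ × Bool)}
    (ht : t.IsChain (StackRel c))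
    (h : (stackAutomaton hP S).StepsIn k (true, (mk t)⁻¹, w) (true, 1, [])) :
    ∃ s, t = s.map (·, true) ∧ StackRun P s w k := by
  classical
  induction k generalizing t w with
  | zero =>
    have hword : (mk t)⁻¹ = 1 := congrArg (·.2.1) h
    obtain rfl : w = [] := congrArg (·.2.2) h
    have hnil : t = [] := by
      rw [← List.length_eq_zero_iff, ← norm_mk_of_isReduced (isReduced_of_isChain_stackRel ht),
        inv_eq_one.mp hword, FreeGroup.norm_one]
    exact ⟨[], hnil, .nil⟩
  | succ k ih =>
    obtain ⟨⟨q, y, v⟩, hstep, hk⟩ := h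
    obtain ⟨rfl, A, o, l, hA, rfl, rfl⟩ := stackAutomaton_step_true_iff.mp hstep
    by_cases hhead : t.head? = some (A, true)
    · obtain ⟨t, rfl⟩ := List.head?_eq_some_iff.mp hhead
      have hword : (mk ((A, true) :: t))⁻¹ * (stackWord [A] * (stackWord l)⁻¹) =
          (mk (l.map (·, true) ++ t))⁻¹ := by
        rw [← List.singleton_append, ← mul_mk, ← mul_mk, stackWord, stackWord, List.map_singleton]
        group
      rw [hword] at hk
      obtain ⟨s, hs, hrun⟩ := ih (isChain_stackRel_pop hc hA ht) hk
      obtain ⟨l', s, rfl, hl', rfl⟩ := List.map_eq_append_iff.mp hs.symm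
      obtain rfl := List.map_injective_iff.mpr (Prod.mk_left_injective true) hl'
      exact ⟨A :: s, rfl, .pop hA hrun⟩
    · have hword : (mk t)⁻¹ * (stackWord [A] * (stackWord l)⁻¹) =
          (mk (l.map (·, true) ++ (A, false) :: t))⁻¹ := by
        rw [← List.singleton_append (l := t), ← mul_mk, ← mul_mk, stackWord, stackWord,
          show mk [(A, false)] = (mk [(A, true)])⁻¹ from rfl, List.map_singleton]
        group
      rw [hword] at hk
      obtain ⟨s, hs, -⟩ := ih (isChain_stackRel_pop_of_head?_ne hc hA ht hhead) hk
      have hneg : (A, false) ∈ s.map (·, true) := hs ▸ by simp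
      simp at hneg

theorem acceptsIn_stackAutomaton_iff {c : Γ} (hc : IsEndMarked P c) {n : ℕ} :
    (stackAutomaton hP S).AcceptsIn w n ↔ ∃ k, k + 1 ≤ n ∧ StackRun P [S] w k := by
  constructor
  · rintro ⟨_ | k, hk, q, rfl, hsteps⟩
    · simp [GAutomaton.StepsIn, stackAutomaton] at hsteps
    obtain ⟨⟨q, y, v⟩, hstep, hsteps⟩ := hsteps
    obtain ⟨rfl, rfl, rfl⟩ := stackAutomaton_step_false_iff.mp hstep
    rw [one_mul] at hsteps
    obtain ⟨s, hs, hrun⟩ := exists_stackRun_of_stepsIn hc (isChain_stackRel_map c [S]) hsteps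
    obtain rfl := List.map_injective_iff.mpr (Prod.mk_left_injective true) hs
    exact ⟨k, hk, hrun⟩
  · rintro ⟨k, hk, hrun⟩
    exact ⟨k + 1, hk, true, rfl, (true, (stackWord [S])⁻¹, w),
      stackAutomaton_step_false_iff.mpr ⟨rfl, (one_mul _).symm, rfl⟩, hrun.stepsIn⟩

end StackAutomaton

section FactorRules

variable {α : Type*} (g : ContextFreeGrammar α)

/-- The factors of a grammar: the contiguous parts of its initial form and of the right hand sides
of its rules. -/
def grammarFactors : Set (List (Symbol α g.NT)) :=
  {l | l <:+: [.nonterminal g.initial] ∨ ∃ r ∈ g.rules, l <:+: r.output}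

theorem finite_grammarFactors : (grammarFactors g).Finite := by
  have hfin (o : List (Symbol α g.NT)) : {l | l <:+: o}.Finite :=
    o.sublists.finite_toSet.subset fun l hl => List.mem_sublists.mpr (List.IsInfix.sublist hl)
  have hrules := g.rules.finite_toSet.biUnion fun r _ => hfin r.output
  refine ((hfin [.nonterminal g.initial]).union hrules).subset ?_
  rintro l (h | ⟨r, hr, h⟩)
  · exact .inl h
  · exact .inr (Set.mem_biUnion hr h)

variable {g}

theorem mem_grammarFactors_of_isInfix {l m : List (Symbol α g.NT)} (hm : m ∈ grammarFactors g)
    (h : l <:+: m) : l ∈ grammarFactors g :=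
  hm.imp h.trans fun ⟨r, hr, hmr⟩ => ⟨r, hr, h.trans hmr⟩

theorem nil_mem_grammarFactors : [] ∈ grammarFactors g :=
  .inl List.nil_suffix.isInfix

variable (g) in
/-- The factor that consists of the initial symbol. -/
def initialFactor : grammarFactors g := ⟨[.nonterminal g.initial], .inl List.infix_rfl⟩

/-- The rules of a pushdown automaton whose stack letters are the factors of a grammar, with an end
marker `none`. Derivations of any length serve as side conditions, so that a nonempty word has a
run of linear length. -/
inductive FactorRule :
    Option (grammarFactors g) × Option α × List (Option (grammarFactors g)) → Prop
  | erase : FactorRule (none, none, [])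
  | read {A : grammarFactors g} {o : Option α} (ho : o.toList.map .terminal ∈ grammarFactors g)
      (h : g.Derives A (o.toList.map .terminal)) : FactorRule (some A, o, [none])
  | split {A X Y : grammarFactors g} (h : g.Derives A (X ++ Y)) :
      FactorRule (some A, none, [some X, some Y, none])

variable (g) in
/-- `FactorRule` as a set of rules, in the form used by `StackRun`. -/
def factorRules : Set (Option (grammarFactors g) × Option α × List (Option (grammarFactors g))) :=
  {r | FactorRule r}

theorem finite_factorRules : (factorRules g).Finite := by
  have := (finite_grammarFactors g).to_subtype
  have hinj : Function.Injective fun o : Option α =>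
      (o.toList.map .terminal : List (Symbol α g.NT)) := by
    rintro (_ | a) (_ | b) h <;> simp_all
  have hread : {o : Option α | o.toList.map .terminal ∈ grammarFactors g}.Finite :=
    (finite_grammarFactors g).preimage hinj.injOn
  refine (Set.finite_univ.prod (hread.prod (List.finite_length_le _ 3))).subset ?_
  rintro _ (_ | ⟨ho, _⟩ | _)
  · exact ⟨trivial, nil_mem_grammarFactors, by simp⟩
  · exact ⟨trivial, ho, by simp⟩
  · exact ⟨trivial, nil_mem_grammarFactors, by simp⟩

theorem isEndMarked_factorRules : IsEndMarked (factorRules g) none := by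
  rintro _ _ _ (_ | _ | @⟨_, X, Y, _⟩)
  · exact .inl ⟨rfl, rfl⟩
  · exact .inr ⟨nofun, [], rfl⟩
  · exact .inr ⟨nofun, [some X, some Y], rfl⟩

/-- The sentential form represented by a stack of factors and end markers. -/
def sententialForm (s : List (Option (grammarFactors g))) : List (Symbol α g.NT) :=
  s.flatMap fun A => A.elim [] Subtype.val

theorem FactorRule.derives {A : Option (grammarFactors g)} {o : Option α}
    {l : List (Option (grammarFactors g))} (h : FactorRule (A, o, l)) :
    g.Derives (sententialForm [A]) (o.toList.map .terminal ++ sententialForm l) := by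
  cases h with
  | erase => exact .refl _
  | read _ h => simpa [sententialForm] using h
  | split h => simpa [sententialForm] using h

theorem derives_of_stackRun {s : List (Option (grammarFactors g))} {w : List α} {k : ℕ}
    (h : StackRun (factorRules g) s w k) : g.Derives (sententialForm s) (w.map .terminal) := by
  induction h with
  | nil => exact .refl _
  | @pop A o l s _ _ hP _ ih =>
    have happend (s t : List (Option (grammarFactors g))) :
        sententialForm (s ++ t) = sententialForm s ++ sententialForm t := List.flatMap_append
    rw [← List.singleton_append, happend, List.map_append]
    refine ((FactorRule.derives hP).append_right _).trans ?_
    rw [List.append_assoc, ← happend]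
    exact ih.append_left _

variable {A X Y : grammarFactors g} {u v w : List α}

theorem stackRun_erase : StackRun (factorRules g) [none] [] 1 :=
  .pop (o := none) .erase .nil

theorem stackRun_read {o : Option α} (ho : o.toList.map .terminal ∈ grammarFactors g)
    (h : g.Derives A (o.toList.map .terminal)) :
    StackRun (factorRules g) [some A] o.toList 2 := by
  have := StackRun.pop (s := []) (FactorRule.read ho h) stackRun_erase
  rwa [List.append_nil] at this

theorem stackRun_split {j k : ℕ} (h : g.Derives A (X ++ Y))
    (hX : StackRun (factorRules g) [some X] u j) (hY : StackRun (factorRules g) [some Y] v k) :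
    StackRun (factorRules g) [some A] (u ++ v) (j + k + 2) := by
  have := (hX.append hY).append stackRun_erase
  rw [List.append_nil] at this
  exact .pop (o := none) (s := []) (.split h) this

theorem stackRun_of_derives {k : ℕ} (h : StackRun (factorRules g) [some X] w k)
    (hA : g.Derives A X) : StackRun (factorRules g) [some A] w k := by
  cases h with
  | pop hP h =>
    cases hP with
    | read ho hX => exact .pop (.read ho (hA.trans hX)) h
    | split hX => exact .pop (.split (hA.trans hX)) h

/-- The word is derived from the factor and, unless it is empty, has a run of linear length. -/
def HasShortRun (A : grammarFactors g) (w : List α) : Prop :=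
  g.Derives A (w.map .terminal) ∧
    (w ≠ [] → ∃ k, k + 2 ≤ 4 * w.length ∧ StackRun (factorRules g) [some A] w k)

theorem HasShortRun.of_derives (h : HasShortRun X w) (hA : g.Derives A X) : HasShortRun A w :=
  ⟨hA.trans h.1, fun hw => (h.2 hw).imp fun _ hk => ⟨hk.1, stackRun_of_derives hk.2 hA⟩⟩

theorem HasShortRun.append (hu : HasShortRun X u) (hv : HasShortRun Y v)
    (hA : g.Derives A (X ++ Y)) : HasShortRun A (u ++ v) := by
  rcases eq_or_ne u [] with rfl | hu'
  · exact hv.of_derives (hA.trans (hu.1.append_right Y))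
  rcases eq_or_ne v [] with rfl | hv'
  · rw [List.append_nil]
    exact hu.of_derives (hA.trans (by simpa using hv.1.append_left X))
  obtain ⟨j, hj, hju⟩ := hu.2 hu'
  obtain ⟨k, hk, hkv⟩ := hv.2 hv'
  refine ⟨?_, fun _ => ⟨j + k + 2, ?_, stackRun_split hA hju hkv⟩⟩
  · rw [List.map_append]
    exact hA.trans (derives_append hu.1 hv.1)
  · rw [List.length_append]
    omega

variable (g) in
/-- The words with short runs from a nonterminal; there is no condition if the nonterminal does not
occur in any factor. -/
def shortRunLanguage (A : g.NT) : Language α :=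
  {w | ∀ h : [.nonterminal A] ∈ grammarFactors g, HasShortRun ⟨_, h⟩ w}

theorem hasShortRun_of_mem_prod {l : List (Symbol α g.NT)} (hl : l ∈ grammarFactors g)
    (hw : w ∈ (l.map (symbolLanguage (shortRunLanguage g))).prod) : HasShortRun ⟨l, hl⟩ w := by
  induction l generalizing w with
  | nil =>
    obtain rfl : w = [] := hw
    exact ⟨.refl _, fun h => absurd rfl h⟩
  | cons x l ih =>
    rw [List.map_cons, List.prod_cons] at hw
    obtain ⟨u, hu, v, hv, rfl⟩ := hw
    have hx : [x] ∈ grammarFactors g := mem_grammarFactors_of_isInfix hl ⟨[], l, rfl⟩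
    have hl' : l ∈ grammarFactors g :=
      mem_grammarFactors_of_isInfix hl (List.suffix_cons x l).isInfix
    refine HasShortRun.append (X := ⟨[x], hx⟩) ?_ (ih hl' hv) (.refl _)
    cases x with
    | terminal a =>
      obtain rfl : u = [a] := hu
      exact ⟨.refl _, fun _ => ⟨2, le_rfl, stackRun_read (o := some a) hx (.refl _)⟩⟩
    | nonterminal A => exact hu hx

theorem hasShortRun_of_derives (h : g.Derives A (w.map .terminal)) : HasShortRun A w := by
  refine hasShortRun_of_mem_prod A.2 (mem_prod_symbolLanguage_of_derives ?_ h)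
  intro r hr w hw _
  exact (hasShortRun_of_mem_prod (.inr ⟨r, hr, List.infix_rfl⟩) hw).of_derives (derives_output hr)

theorem exists_stackRun_of_derives (h : g.Derives A (w.map .terminal)) :
    ∃ k, k + 1 ≤ 4 * w.length + 4 ∧ StackRun (factorRules g) [some A] w k := by
  rcases eq_or_ne w [] with rfl | hne
  · exact ⟨2, by simp, stackRun_read (o := none) nil_mem_grammarFactors h⟩
  · obtain ⟨k, hk, hrun⟩ := (hasShortRun_of_derives h).2 hne
    exact ⟨k, by omega, hrun⟩

end FactorRules

theorem gRecognizableLinTime_of_isContextFree {α : Type*} (β : Type*) [Nontrivial β]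
    {L : Language α} (hL : L.IsContextFree) : GRecognizableLinTime (FreeGroup β) L := by
  obtain ⟨g, rfl⟩ := hL
  have := (finite_grammarFactors g).to_subtype
  obtain ⟨φ, hφ⟩ := exists_injective_freeGroup_of_countable (Option (grammarFactors g)) β
  refine ⟨4, GRecognizableInTime.of_injective
    ⟨stackAutomaton finite_factorRules (some (initialFactor g)), ?_, fun w hw => ?_⟩ hφ⟩
  · ext w
    constructor
    · rintro ⟨t, ht⟩
      obtain ⟨k, -, hk⟩ := (acceptsIn_stackAutomaton_iff isEndMarked_factorRules).mp ht
      exact derives_of_stackRun hk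
    · intro hw
      obtain ⟨k, -, hk⟩ := exists_stackRun_of_derives (A := initialFactor g) hw
      exact ⟨k + 1, (acceptsIn_stackAutomaton_iff isEndMarked_factorRules).mpr ⟨k, le_rfl, hk⟩⟩
  · exact (acceptsIn_stackAutomaton_iff isEndMarked_factorRules).mpr
      (exists_stackRun_of_derives (A := initialFactor g) hw)

theorem cf_eq_lintime_F2_general {α β : Type*} [Countable β] [Nontrivial β] (L : Language α) :
    List.TFAE [L.IsContextFree, GRecognizable (FreeGroup β) L,
      GRecognizableLinTime (FreeGroup β) L] := by
  tfae_have 1 → 3 := gRecognizableLinTime_of_isContextFree β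
  tfae_have 3 → 2 := fun ⟨_, M, hM, _⟩ => ⟨M, hM⟩
  tfae_have 2 → 1 := isContextFree_of_gRecognizable
  tfae_finish

/-- `𝔏(F₂)ʷ_{O(n)} = CF`: a language is context-free iff it is
recognized by some weakly linear-time bounded `F₂`-automaton. -/
theorem cf_eq_lintime_F2 {α : Type} [Fintype α] (L : Language α) :
    L.IsContextFree ↔ GRecognizableLinTime (FreeGroup (Fin 2)) L :=
  (cf_eq_lintime_F2_general L).out 0 2
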